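/- arXiv:math/0412143 — 2 statements merged into one kernel-verified Lean document; each statement's English description precedes it below -/
import Mathlib

section
/- There exists a unique ℂ-linear anti-homomorphism S : A(q) → A(q) (i.e., S(1) = 1 and S(uv) = S(v)S(u) for all u, v) satisfying S(a) = a^{n−1} and S(x) = −x · ∑_{z=0}^{n−1} q^{n−z} 1_z. Moreover S²(a) = a, S²(x) = q^{n+1} x, and consequently S^{2n}(u) = a u a^{n−1} for all u ∈ A(q), i.e., S^{2n} is the inner automorphism Ad(a). -/
noncomputable section

/-- The two generators. -/
inductive AqGen : Type
  | a : AqGen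
  | x : AqGen

open FreeAlgebra

/-- The defining relations of `A(q)`. -/
inductive AqRel (n : ℕ) (q : ℂ) : FreeAlgebra ℂ AqGen → FreeAlgebra ℂ AqGen → Prop
  | comm : AqRel n q (ι ℂ AqGen.a * ι ℂ AqGen.x) (q ^ n • (ι ℂ AqGen.x * ι ℂ AqGen.a))
  | aOrd : AqRel n q ((ι ℂ AqGen.a) ^ n) 1
  | xNil : AqRel n q ((ι ℂ AqGen.x) ^ (n ^ 2)) 0

/-- The algebra `A(q)`. -/
abbrev Aq (n : ℕ) (q : ℂ) : Type := RingQuot (AqRel n q)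

/-- The image of the generator `a` in `A(q)`. -/
def Aq.a (n : ℕ) (q : ℂ) : Aq n q := RingQuot.mkAlgHom ℂ (AqRel n q) (ι ℂ AqGen.a)

/-- The image of the generator `x` in `A(q)`. -/
def Aq.x (n : ℕ) (q : ℂ) : Aq n q := RingQuot.mkAlgHom ℂ (AqRel n q) (ι ℂ AqGen.x)

/-- The primitive idempotents `1_i = (1/n) ∑_{k} q^{-nik} a^k` of `ℂ[a] ⊆ A(q)`. -/
def Aq.e (n : ℕ) (q : ℂ) (i : ℕ) : Aq n q :=
  (n : ℂ)⁻¹ • ∑ k ∈ Finset.range n, (q⁻¹ ^ (n * i * k)) • (Aq.a n q ^ k)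

/-!
We have `S(x) = x * P(a)` for a polynomial `P` with `P(q ^ (n * j)) = -q ^ (n - j)` for `j < n`.
Every polynomial satisfies `P(a) * x = x * P(q ^ n • a)`, so the powers of `x * P(a)` are powers of
`x` times polynomials in `a`, and the values of `S` on the generators respect the relations.
Moreover `S²(x) = P(a⁻¹) * x * P(a) = x * P((q ^ n • a)⁻¹) * P(a)`. As `a ^ n = 1`, a polynomial
in `a` depends only on its values at the `n`-th roots of unity, and at `q ^ (n * j)` the last
product is `P(q ^ (n * (n - 1 - j))) * P(q ^ (n * j)) = q ^ (j + 1) * q ^ (n - j) = q ^ (n + 1)`.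
-/

open Polynomial MulOpposite

section EvalAtRootsOfUnity

variable {R : Type*} [CommRing R] [IsDomain R] {n : ℕ} {ζ : R}

theorem X_pow_sub_one_dvd_of_eval_pow_eq_zero (hn : n ≠ 0) (hζ : IsPrimitiveRoot ζ n)
    {p : R[X]} (hp : ∀ j < n, p.eval (ζ ^ j) = 0) : X ^ n - 1 ∣ p := by
  have monic : (X ^ n - 1 : R[X]).Monic := monic_X_pow_sub_C 1 hn
  rw [← modByMonic_eq_zero_iff_dvd monic]
  refine eq_zero_of_degree_lt_of_eval_index_eq_zero (v := fun j ↦ ζ ^ j) (Finset.range n) ?_ ?_ ?_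
  · simpa using hζ.injOn_pow
  · have degree_eq : (X ^ n - 1 : R[X]).degree = n :=
      degree_X_pow_sub_C (Nat.pos_of_ne_zero hn) 1
    simpa only [degree_eq, Finset.card_range] using degree_modByMonic_lt p monic
  · intro j hj
    have hroot : (X ^ n - 1 : R[X]).eval (ζ ^ j) = 0 := by
      simp [pow_right_comm, hζ.pow_eq_one]
    rw [modByMonic_eq_sub_mul_div, eval_sub, eval_mul, hroot, zero_mul, sub_zero]
    exact hp j (Finset.mem_range.1 hj)

theorem aeval_eq_aeval_of_eval_pow_eq {A : Type*} [Ring A] [Algebra R A] (hn : n ≠ 0)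
    (hζ : IsPrimitiveRoot ζ n) {b : A} (hb : b ^ n = 1) {p r : R[X]}
    (hpr : ∀ j < n, p.eval (ζ ^ j) = r.eval (ζ ^ j)) : aeval b p = aeval b r := by
  have hdvd : X ^ n - 1 ∣ p - r :=
    X_pow_sub_one_dvd_of_eval_pow_eq_zero hn hζ fun j hj ↦ by rw [eval_sub, hpr j hj, sub_self]
  rw [← sub_eq_zero, ← map_sub]
  exact aeval_eq_zero_of_dvd_aeval_eq_zero hdvd (by simp [hb])

end EvalAtRootsOfUnity

section Interpolation

variable {K : Type*} [Field K] {n : ℕ}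

/-- The polynomial `(1/n) ∑_k ζ^{-ik} X^k`. For `ζ` a primitive `n`-th root of unity and `i < n` it
interpolates the indicator function of `ζ ^ i` on the `n`-th roots of unity, so that its value at
`a ∈ A(q)`, for `ζ = q ^ n`, is the idempotent `1_i`. -/
def rootIdempotent (n : ℕ) (ζ : K) (i : ℕ) : K[X] :=
  (n : K)⁻¹ • ∑ k ∈ Finset.range n, ζ⁻¹ ^ (i * k) • X ^ k

/-- The polynomial `P = -∑_z q^{n-z} 1_z(X)`, where `1_z(X)` is `rootIdempotent n (q ^ n) z`. The
antipode is given on `x ∈ A(q)` by `S(x) = x P(a)`. -/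
def antipodePoly (n : ℕ) (q : K) : K[X] :=
  -∑ z ∈ Finset.range n, q ^ (n - z) • rootIdempotent n (q ^ n) z

theorem eval_rootIdempotent {ζ : K} (hζ : IsPrimitiveRoot ζ n) {i j : ℕ} (hi : i < n)
    (hj : j < n) : (rootIdempotent n ζ i).eval (ζ ^ j) = if i = j then 1 else 0 := by
  have : NeZero n := ⟨by omega⟩
  have hn : (n : K) ≠ 0 := hζ.neZero'.ne
  have hζi : ζ ^ i ≠ 0 := pow_ne_zero _ (hζ.ne_zero (NeZero.ne n))
  have eval_eq_geom_sum : (rootIdempotent n ζ i).eval (ζ ^ j) =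
      (n : K)⁻¹ * ∑ k ∈ Finset.range n, ((ζ ^ i)⁻¹ * ζ ^ j) ^ k := by
    simp [rootIdempotent, eval_finsetSum, mul_pow, pow_mul]
  rw [eval_eq_geom_sum]
  split_ifs with hij
  · simp [← hij, inv_mul_cancel₀ hζi, hn]
  · have ratio_ne_one : (ζ ^ i)⁻¹ * ζ ^ j ≠ 1 := by
      rw [Ne, inv_mul_eq_one₀ hζi]
      exact fun h ↦ hij (hζ.pow_inj hi hj h)
    have ratio_pow : ((ζ ^ i)⁻¹ * ζ ^ j) ^ n = 1 := by
      simp [mul_pow, pow_right_comm _ _ n, hζ.pow_eq_one]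
    rw [geom_sum_eq ratio_ne_one, ratio_pow, sub_self, zero_div, mul_zero]

theorem eval_antipodePoly {q : K} (hq : IsPrimitiveRoot (q ^ n) n) {j : ℕ} (hj : j < n) :
    (antipodePoly n q).eval ((q ^ n) ^ j) = -q ^ (n - j) := by
  rw [antipodePoly, eval_neg, eval_finsetSum, Finset.sum_eq_single_of_mem j (Finset.mem_range.2 hj)]
  · simp [eval_rootIdempotent hq hj hj]
  · intro z hz hzj
    simp [eval_rootIdempotent hq (Finset.mem_range.1 hz) hj, hzj]

theorem eval_antipodePoly_mul_eval {q : K} (hq : IsPrimitiveRoot (q ^ n) n) {j : ℕ} (hj : j < n) :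
    (antipodePoly n q).eval (((q ^ n) ^ (j + 1)) ^ (n - 1)) *
      (antipodePoly n q).eval ((q ^ n) ^ j) = q ^ (n + 1) := by
  have inv_eq : ((q ^ n) ^ (j + 1)) ^ (n - 1) = (q ^ n) ^ (n - 1 - j) := by
    obtain ⟨m, rfl⟩ : ∃ m, n = m + j + 1 := ⟨n - j - 1, by omega⟩
    have exponent_eq : (j + 1) * (m + j) = (m + j + 1) * j + m := by ring
    rw [Nat.add_sub_cancel, Nat.add_sub_cancel, ← pow_mul, exponent_eq, pow_add,
      pow_mul _ (m + j + 1), hq.pow_eq_one, one_pow, one_mul]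
  rw [inv_eq, eval_antipodePoly hq (by omega), eval_antipodePoly hq hj, neg_mul_neg, ← pow_add]
  congr 1
  omega

end Interpolation

section SemiconjBy

variable {R A : Type*} [CommSemiring R] [Semiring A] [Algebra R A]

theorem semiconjBy_aeval {x b a : A} (h : SemiconjBy x b a) (p : R[X]) :
    SemiconjBy x (aeval b p) (aeval a p) := by
  induction p using Polynomial.induction_on' with
  | add p r hp hr => simpa only [map_add] using hp.add_right hr
  | monomial k c =>
    simpa only [aeval_monomial, ← Algebra.smul_def] using (h.pow_right k).smul_right c

theorem exists_mul_aeval_pow_eq {x a : A} {p : R[X]} (h : SemiconjBy x (aeval a p) a) (r : R[X])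
    (k : ℕ) : ∃ s : R[X], (x * aeval a r) ^ k = x ^ k * aeval a s := by
  induction k with
  | zero => exact ⟨1, by simp⟩
  | succ k ih =>
    obtain ⟨s, hs⟩ := ih
    have move_x : aeval a s * x = x * aeval a (s.comp p) := by
      rw [aeval_comp, (semiconjBy_aeval h s).eq]
    refine ⟨s.comp p * r, ?_⟩
    calc (x * aeval a r) ^ (k + 1) = x ^ k * (aeval a s * x) * aeval a r := by
          simp only [pow_succ, hs, mul_assoc]
      _ = x ^ (k + 1) * aeval a (s.comp p * r) := by
          simp only [move_x, map_mul, pow_succ, mul_assoc]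

theorem mul_aeval_pow_eq_zero {x a : A} {p : R[X]} (h : SemiconjBy x (aeval a p) a) (r : R[X])
    {m : ℕ} (hx : x ^ m = 0) : (x * aeval a r) ^ m = 0 := by
  obtain ⟨s, hs⟩ := exists_mul_aeval_pow_eq h r m
  rw [hs, hx, zero_mul]

end SemiconjBy

section AntiHom

variable {R A B D : Type*} [CommSemiring R] [Semiring A] [Algebra R A] [Semiring B] [Algebra R B]
  [Semiring D] [Algebra R D]

/-- A linear map between algebras is an anti-homomorphism if it preserves `1` and reverses
products. -/
structure IsAntiHom (S : A →ₗ[R] B) : Prop where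
  map_one : S 1 = 1
  map_mul : ∀ u v, S (u * v) = S v * S u

namespace IsAntiHom

variable {S : A →ₗ[R] B}

/-- An anti-homomorphism `A → B` as an algebra homomorphism from `A` to the opposite of `B`. -/
def toOpAlgHom (hS : IsAntiHom S) : A →ₐ[R] Bᵐᵒᵖ :=
  AlgHom.ofLinearMap ((opLinearEquiv R).toLinearMap ∘ₗ S) (by simp [hS.map_one])
    (by simp [hS.map_mul])

theorem toOpAlgHom_apply (hS : IsAntiHom S) (u : A) : hS.toOpAlgHom u = op (S u) := rfl

/-- The composition of two anti-homomorphisms, which is an algebra homomorphism. -/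
def compAlgHom {T : B →ₗ[R] D} (hT : IsAntiHom T) (hS : IsAntiHom S) : A →ₐ[R] D :=
  AlgHom.ofLinearMap (T ∘ₗ S) (by simp [hS.map_one, hT.map_one])
    (by simp [hS.map_mul, hT.map_mul])

theorem map_aeval (hS : IsAntiHom S) (b : A) (p : R[X]) : S (aeval b p) = aeval (S b) p := by
  apply op_injective
  rw [← hS.toOpAlgHom_apply, ← aeval_algHom_apply, hS.toOpAlgHom_apply, aeval_op_apply]

theorem map_pow (hS : IsAntiHom S) (b : A) (k : ℕ) : S (b ^ k) = S b ^ k := by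
  simpa only [_root_.map_pow, aeval_X] using hS.map_aeval b (X ^ k)

end IsAntiHom

theorem isAntiHom_unop_comp (f : A →ₐ[R] Bᵐᵒᵖ) :
    IsAntiHom ((opLinearEquiv R).symm.toLinearMap ∘ₗ f.toLinearMap) where
  map_one := by simp
  map_mul := by simp

end AntiHom

theorem algHom_pow_apply_of_apply_eq_smul {R A : Type*} [CommSemiring R] [Semiring A]
    [Algebra R A] {f : A →ₐ[R] A} {y : A} {c : R} (h : f y = c • y) (k : ℕ) :
    (f ^ k) y = c ^ k • y := by
  induction k with
  | zero => simp
  | succ k ih => rw [pow_succ, AlgHom.mul_apply, h, map_smul, ih, smul_smul, ← pow_succ']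

theorem mul_units_inv_eq_smul {R M : Type*} [Monoid M] [SMul R M] [IsScalarTower R M M]
    [SMulCommClass R M M] {u : Mˣ} {y : M} {c : R} (h : ↑u * y = c • (y * ↑u)) :
    y * ↑u⁻¹ = c • (↑u⁻¹ * y) := by
  rw [Units.mul_inv_eq_iff_eq_mul, smul_mul_assoc, mul_assoc, ← mul_smul_comm, ← h,
    Units.inv_mul_cancel_left]

namespace Aq

variable {n : ℕ} {q : ℂ}

theorem a_pow : a n q ^ n = 1 := by
  simpa [a] using RingQuot.mkAlgHom_rel ℂ (AqRel.aOrd (n := n) (q := q))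

theorem x_pow : x n q ^ n ^ 2 = 0 := by
  simpa [x] using RingQuot.mkAlgHom_rel ℂ (AqRel.xNil (n := n) (q := q))

theorem a_mul_x : a n q * x n q = q ^ n • (x n q * a n q) := by
  simpa [a, x] using RingQuot.mkAlgHom_rel ℂ (AqRel.comm (n := n) (q := q))

section UniversalProperty

variable {B : Type*} [Semiring B] [Algebra ℂ B]

theorem algHom_ext {f g : Aq n q →ₐ[ℂ] B} (ha : f (a n q) = g (a n q))
    (hx : f (x n q) = g (x n q)) : f = g := by
  refine RingQuot.ringQuot_ext' ℂ _ _ (FreeAlgebra.hom_ext (funext fun i ↦ ?_))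
  cases i with
  | a => exact ha
  | x => exact hx

theorem exists_algHom {α ξ : B} (hαξ : α * ξ = q ^ n • (ξ * α)) (hα : α ^ n = 1)
    (hξ : ξ ^ n ^ 2 = 0) : ∃ f : Aq n q →ₐ[ℂ] B, f (a n q) = α ∧ f (x n q) = ξ := by
  let φ : FreeAlgebra ℂ AqGen →ₐ[ℂ] B := FreeAlgebra.lift ℂ (AqGen.rec α ξ)
  have φ_a : φ (ι ℂ AqGen.a) = α := FreeAlgebra.lift_ι_apply _ _
  have φ_x : φ (ι ℂ AqGen.x) = ξ := FreeAlgebra.lift_ι_apply _ _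
  have φ_rel : ∀ ⦃u v⦄, AqRel n q u v → φ u = φ v := by
    rintro _ _ (_ | _ | _) <;> simpa [φ_a, φ_x]
  refine ⟨RingQuot.liftAlgHom ℂ ⟨φ, φ_rel⟩, ?_, ?_⟩
  · rw [a, RingQuot.liftAlgHom_mkAlgHom_apply, φ_a]
  · rw [x, RingQuot.liftAlgHom_mkAlgHom_apply, φ_x]

theorem antiHom_ext {S T : Aq n q →ₗ[ℂ] B} (hS : IsAntiHom S) (hT : IsAntiHom T)
    (ha : S (a n q) = T (a n q)) (hx : S (x n q) = T (x n q)) : S = T := by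
  have toOp_eq : hS.toOpAlgHom = hT.toOpAlgHom :=
    algHom_ext (congrArg op ha) (congrArg op hx)
  exact LinearMap.ext fun u ↦ op_injective (DFunLike.congr_fun toOp_eq u)

end UniversalProperty

theorem x_mul_aeval_antipodePoly : x n q * aeval (a n q) (antipodePoly n q) =
    -(x n q * ∑ z ∈ Finset.range n, q ^ (n - z) • e n q z) := by
  have aeval_eq : aeval (a n q) (∑ z ∈ Finset.range n, q ^ (n - z) • rootIdempotent n (q ^ n) z) =
      ∑ z ∈ Finset.range n, q ^ (n - z) • e n q z := by
    simp only [rootIdempotent, e, map_sum, map_smul, map_pow, aeval_X, inv_pow,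
      ← pow_mul, mul_assoc]
  rw [antipodePoly, map_neg, aeval_eq]
  -- `mul_neg` does not rewrite here: negation on a `RingQuot` is an instance of its own.
  exact mul_neg (x n q) _

theorem semiconjBy_x : SemiconjBy (x n q) (q ^ n • a n q) (a n q) := by
  rw [SemiconjBy, a_mul_x, mul_smul_comm]

theorem x_mul_aeval_pow (p : ℂ[X]) : (x n q * aeval (a n q) p) ^ n ^ 2 = 0 := by
  refine mul_aeval_pow_eq_zero (p := q ^ n • X) ?_ p x_pow
  simpa only [map_smul, aeval_X] using semiconjBy_x

theorem aeval_antipodePoly_mul_x_mul_aeval (hn : n ≠ 0) (hq : IsPrimitiveRoot (q ^ n) n) :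
    aeval (a n q ^ (n - 1)) (antipodePoly n q) * (x n q * aeval (a n q) (antipodePoly n q)) =
      q ^ (n + 1) • x n q := by
  set P := antipodePoly n q
  have move_x : aeval (a n q ^ (n - 1)) P * x n q =
      x n q * aeval (a n q) (P.comp ((q ^ n • X) ^ (n - 1))) := by
    rw [aeval_comp, map_pow, map_smul, aeval_X]
    exact (semiconjBy_aeval (semiconjBy_x.pow_right (n - 1)) P).eq.symm
  have product_eq : aeval (a n q) (P.comp ((q ^ n • X) ^ (n - 1)) * P) =
      aeval (a n q) (C (q ^ (n + 1))) := by
    refine aeval_eq_aeval_of_eval_pow_eq hn hq a_pow fun j hj ↦ ?_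
    rw [eval_mul, eval_comp, eval_pow, eval_smul, eval_X, smul_eq_mul, ← pow_succ', eval_C]
    exact eval_antipodePoly_mul_eval hq hj
  rw [← mul_assoc, move_x, mul_assoc, ← map_mul, product_eq, aeval_C, ← Algebra.commutes,
    Algebra.smul_def]

/-- The generator `a` as a unit of `A(q)`, with inverse `a ^ (n - 1)`. -/
def aUnit (q : ℂ) (hn : n ≠ 0) : (Aq n q)ˣ := Units.ofPowEqOne (a n q) n a_pow hn

theorem coe_inv_aUnit (hn : n ≠ 0) : ((aUnit q hn)⁻¹ : (Aq n q)ˣ) = a n q ^ (n - 1) := by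
  simp [aUnit]

theorem a_mul_a_pow_sub_one (hn : n ≠ 0) : a n q * a n q ^ (n - 1) = 1 := by
  rw [mul_pow_sub_one hn, a_pow]

theorem x_mul_a_pow_sub_one (hn : n ≠ 0) :
    x n q * a n q ^ (n - 1) = q ^ n • (a n q ^ (n - 1) * x n q) := by
  rw [← coe_inv_aUnit hn]
  exact mul_units_inv_eq_smul a_mul_x

theorem exists_antiHom (hn : n ≠ 0) (p : ℂ[X]) :
    ∃ S : Aq n q →ₗ[ℂ] Aq n q, IsAntiHom S ∧ S (a n q) = a n q ^ (n - 1) ∧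
      S (x n q) = x n q * aeval (a n q) p := by
  have commute_aeval : Commute (a n q ^ (n - 1)) (aeval (a n q) p) :=
    semiconjBy_aeval (Commute.pow_self (a n q) (n - 1)) p
  have reversed_comm : x n q * aeval (a n q) p * a n q ^ (n - 1) =
      q ^ n • (a n q ^ (n - 1) * (x n q * aeval (a n q) p)) := by
    rw [mul_assoc, ← commute_aeval.eq, ← mul_assoc, x_mul_a_pow_sub_one hn, smul_mul_assoc,
      mul_assoc]
  obtain ⟨f, hfa, hfx⟩ := exists_algHom (q := q) (α := op (a n q ^ (n - 1)))
    (ξ := op (x n q * aeval (a n q) p)) (congrArg op reversed_comm)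
    (by rw [← op_pow, pow_right_comm, a_pow, one_pow, op_one])
    (by rw [← op_pow, x_mul_aeval_pow, op_zero])
  exact ⟨_, isAntiHom_unop_comp f, by simp [hfa], by simp [hfx]⟩

theorem antiHom_apply_apply_a (hn : n ≠ 0) {S : Aq n q →ₗ[ℂ] Aq n q} (hS : IsAntiHom S)
    (ha : S (a n q) = a n q ^ (n - 1)) : S (S (a n q)) = a n q :=
  calc S (S (a n q)) = (a n q ^ (n - 1)) ^ (n - 1) := by rw [ha, hS.map_pow, ha]
    _ = a n q * a n q ^ (n - 1) * (a n q ^ (n - 1)) ^ (n - 1) := by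
      rw [a_mul_a_pow_sub_one hn, one_mul]
    _ = a n q := by rw [mul_assoc, mul_pow_sub_one hn, pow_right_comm, a_pow, one_pow, mul_one]

theorem antiHom_apply_apply_x (hn : n ≠ 0) (hq : IsPrimitiveRoot (q ^ n) n)
    {S : Aq n q →ₗ[ℂ] Aq n q} (hS : IsAntiHom S) (ha : S (a n q) = a n q ^ (n - 1))
    (hx : S (x n q) = x n q * aeval (a n q) (antipodePoly n q)) :
    S (S (x n q)) = q ^ (n + 1) • x n q := by
  rw [hx, hS.map_mul, hS.map_aeval, ha, hx, aeval_antipodePoly_mul_x_mul_aeval hn hq]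

theorem algHom_pow_apply_eq_conj (hn : n ≠ 0) (hq : q ^ n ^ 2 = 1) {f : Aq n q →ₐ[ℂ] Aq n q}
    (ha : f (a n q) = a n q) (hx : f (x n q) = q ^ (n + 1) • x n q) (u : Aq n q) :
    (f ^ n) u = a n q * u * a n q ^ (n - 1) := by
  let conj := MulSemiringAction.toAlgHom ℂ (Aq n q) (ConjAct.toConjAct (aUnit q hn))
  have conj_apply (v) : conj v = a n q * v * a n q ^ (n - 1) := by
    rw [← coe_inv_aUnit hn]
    rfl
  have scalar_eq : (q ^ (n + 1)) ^ n = q ^ n := by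
    rw [← pow_mul, add_one_mul, ← sq, pow_add, hq, one_mul]
  suffices f ^ n = conj by rw [this, conj_apply]
  apply algHom_ext
  · rw [conj_apply, mul_assoc, a_mul_a_pow_sub_one hn, mul_one, AlgHom.coe_pow,
      Function.iterate_fixed ha]
  · rw [conj_apply, a_mul_x, smul_mul_assoc, mul_assoc, a_mul_a_pow_sub_one hn, mul_one,
      algHom_pow_apply_of_apply_eq_smul hx, scalar_eq]

end Aq

/-- There is a unique ℂ-linear anti-homomorphism `S` of `A(q)` with `S(a) = a^{n-1}`
and `S(x) = -x ∑_z q^{n-z} 1_z`; moreover `S²(a) = a`, `S²(x) = q^{n+1} x`, and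
`S^{2n} = Ad(a)`. -/
theorem Aq_antipode (n : ℕ) (hn : 2 ≤ n) (q : ℂ) (hq : IsPrimitiveRoot q (n ^ 2)) :
    (∃! S : Aq n q →ₗ[ℂ] Aq n q,
      S 1 = 1 ∧ (∀ u v : Aq n q, S (u * v) = S v * S u) ∧
      S (Aq.a n q) = Aq.a n q ^ (n - 1) ∧
      S (Aq.x n q) = -(Aq.x n q * ∑ z ∈ Finset.range n, q ^ (n - z) • Aq.e n q z)) ∧
    (∀ S : Aq n q →ₗ[ℂ] Aq n q,
      S 1 = 1 → (∀ u v : Aq n q, S (u * v) = S v * S u) →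
      S (Aq.a n q) = Aq.a n q ^ (n - 1) →
      S (Aq.x n q) = -(Aq.x n q * ∑ z ∈ Finset.range n, q ^ (n - z) • Aq.e n q z) →
      S (S (Aq.a n q)) = Aq.a n q ∧
      S (S (Aq.x n q)) = q ^ (n + 1) • Aq.x n q ∧
      ∀ u : Aq n q, (⇑S)^[2 * n] u = Aq.a n q * u * Aq.a n q ^ (n - 1)) := by
  have hn0 : n ≠ 0 := by omega
  have hqn : IsPrimitiveRoot (q ^ n) n := hq.pow (by positivity) (sq n)
  rw [← Aq.x_mul_aeval_antipodePoly]
  refine ⟨?_, fun S h1 hmul ha hx ↦ ?_⟩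
  · obtain ⟨S, hS, ha, hx⟩ := Aq.exists_antiHom (q := q) hn0 (antipodePoly n q)
    refine ⟨S, ⟨hS.map_one, hS.map_mul, ha, hx⟩, ?_⟩
    rintro T ⟨hT1, hTmul, hTa, hTx⟩
    exact Aq.antiHom_ext ⟨hT1, hTmul⟩ hS (hTa.trans ha.symm) (hTx.trans hx.symm)
  · have hS : IsAntiHom S := ⟨h1, hmul⟩
    have hSSa := Aq.antiHom_apply_apply_a hn0 hS ha
    have hSSx := Aq.antiHom_apply_apply_x hn0 hqn hS ha hx
    refine ⟨hSSa, hSSx, fun u ↦ ?_⟩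
    rw [← Aq.algHom_pow_apply_eq_conj (f := hS.compAlgHom hS) hn0 hq.pow_eq_one hSSa hSSx,
      AlgHom.coe_pow, Function.iterate_mul]
    rfl
end
end

section
/- There exists a unique ℂ-linear anti-homomorphism S : H(32) → H(32) satisfying S(a) = a, S(x) = −x(p₊ + i·p₋) and S(y) = −y(p₊ − i·p₋). Moreover S²(x) = i·x, S²(y) = −i·y, S²(a) = a, and consequently S⁴(u) = a u a for all u ∈ H(32), i.e., S⁴ is the inner automorphism Ad(a) (note a = a⁻¹ since a² = 1). -/
noncomputable section

open scoped TensorProduct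

/-- The three generators of `H(32)`. -/
inductive HGen : Type
  | a : HGen
  | x : HGen
  | y : HGen

open FreeAlgebra

/-- The defining relations of `H(32)` (for `i` a fixed primitive 4th root of unity):
`a² = 1`, `ax = -xa`, `ay = -ya`, `x⁴ = 0`, `y⁴ = 0`, `xy = -i·yx`. -/
inductive HRel (i : ℂ) : FreeAlgebra ℂ HGen → FreeAlgebra ℂ HGen → Prop
  | aSq : HRel i ((ι ℂ HGen.a) ^ 2) 1
  | ax : HRel i (ι ℂ HGen.a * ι ℂ HGen.x) (-(ι ℂ HGen.x * ι ℂ HGen.a))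
  | ay : HRel i (ι ℂ HGen.a * ι ℂ HGen.y) (-(ι ℂ HGen.y * ι ℂ HGen.a))
  | xQuart : HRel i ((ι ℂ HGen.x) ^ 4) 0
  | yQuart : HRel i ((ι ℂ HGen.y) ^ 4) 0
  | xy : HRel i (ι ℂ HGen.x * ι ℂ HGen.y) (-(i • (ι ℂ HGen.y * ι ℂ HGen.x)))

/-- The algebra `H(32)`. -/
abbrev H32 (i : ℂ) : Type := RingQuot (HRel i)

/-- The image of the generator `a` in `H(32)`. -/
def H32.a (i : ℂ) : H32 i := RingQuot.mkAlgHom ℂ (HRel i) (ι ℂ HGen.a)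

/-- The image of the generator `x` in `H(32)`. -/
def H32.x (i : ℂ) : H32 i := RingQuot.mkAlgHom ℂ (HRel i) (ι ℂ HGen.x)

/-- The image of the generator `y` in `H(32)`. -/
def H32.y (i : ℂ) : H32 i := RingQuot.mkAlgHom ℂ (HRel i) (ι ℂ HGen.y)

/-- `p₊ = (1+a)/2`. -/
def H32.pp (i : ℂ) : H32 i := (2 : ℂ)⁻¹ • (1 + H32.a i)

/-- `p₋ = (1-a)/2`. -/
def H32.pm (i : ℂ) : H32 i := (2 : ℂ)⁻¹ • (1 - H32.a i)

/-!
For `a² = 1` put `D(t) = p₊ + t p₋`. Then `D(s) D(t) = D(st)` and `D(-1) = a`, while any `z` with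
`az = -za` satisfies `D(t) z = t z D(t⁻¹)`. The prescribed values are `S(x) = -x D(i)` and
`S(y) = -y D(-i)`. They satisfy the defining relations in the opposite algebra because
`z D(s) · w D(t) = s zw D(s⁻¹t)` when `aw = -wa`. If `S(z) = -z D(t)`, then
`S²(z) = D(t) z D(t) = t z`; hence `S⁴` is the algebra endomorphism that fixes `a` and negates `x`
and `y`, which is `Ad(a)`.
-/

section InvolutionScaling

variable {K A : Type*} [Field K] [Ring A] [Algebra K A] {a z w : A} {s t : K}

/-- The element `p₊ + t p₋`, where `p₊ = (1 + a)/2` and `p₋ = (1 - a)/2`. When `a` is an involution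
and `2 ≠ 0`, it acts on a left module as `1` on the `1`-eigenspace of `a` and as `t` on the
`-1`-eigenspace. -/
def involutionScaling (a : A) (t : K) : A :=
  (2 : K)⁻¹ • (1 + a) + t • (2 : K)⁻¹ • (1 - a)

theorem involutionScaling_neg (a : A) (t : K) :
    involutionScaling a (-t) = (2 : K)⁻¹ • (1 + a) - t • (2 : K)⁻¹ • (1 - a) := by
  rw [involutionScaling, neg_smul, ← sub_eq_add_neg]

theorem commute_involutionScaling (a : A) (t : K) : Commute a (involutionScaling a t) := by
  simp only [Commute, SemiconjBy, involutionScaling, mul_add, add_mul, mul_sub, sub_mul,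
    mul_smul_comm, smul_mul_assoc, one_mul, mul_one]

theorem neg_mul_involutionScaling_mul_of_anticomm (hz : a * z = -(z * a)) (t : K) :
    -(z * involutionScaling a t) * a = -(a * -(z * involutionScaling a t)) := by
  rw [neg_mul, mul_assoc, ← (commute_involutionScaling a t).eq, mul_neg, ← mul_assoc, ← mul_assoc,
    hz, neg_mul, neg_neg]

theorem involutionScaling_mul_of_anticomm (hz : a * z = -(z * a)) (ht : t ≠ 0) :
    involutionScaling a t * z = t • (z * involutionScaling a t⁻¹) := by
  simp only [involutionScaling, add_mul, sub_mul, mul_add, mul_sub, smul_mul_assoc, mul_smul_comm,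
    one_mul, mul_one, hz]
  match_scalars <;> field

variable [NeZero (2 : K)]

theorem involutionScaling_one (a : A) : involutionScaling a (1 : K) = 1 := by
  unfold involutionScaling
  match_scalars <;> field

theorem involutionScaling_neg_one (a : A) : involutionScaling a (-1 : K) = a := by
  unfold involutionScaling
  match_scalars <;> field

theorem involutionScaling_mul (ha : a * a = 1) (s t : K) :
    involutionScaling a s * involutionScaling a t = involutionScaling a (s * t) := by
  simp only [involutionScaling, add_mul, sub_mul, mul_add, mul_sub, smul_mul_assoc, mul_smul_comm,
    one_mul, mul_one, ha]
  match_scalars <;> field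

theorem mul_involutionScaling_mul (ha : a * a = 1) (hw : a * w = -(w * a)) (hs : s ≠ 0)
    (z : A) (t : K) :
    z * involutionScaling a s * (w * involutionScaling a t) =
      s • (z * w * involutionScaling a (s⁻¹ * t)) := by
  calc z * involutionScaling a s * (w * involutionScaling a t)
      = z * (involutionScaling a s * w) * involutionScaling a t := by simp only [mul_assoc]
    _ = s • (z * w * (involutionScaling a s⁻¹ * involutionScaling a t)) := by
      rw [involutionScaling_mul_of_anticomm hw hs]
      simp only [mul_smul_comm, smul_mul_assoc, mul_assoc]
    _ = s • (z * w * involutionScaling a (s⁻¹ * t)) := by rw [involutionScaling_mul ha]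

theorem mul_involutionScaling_sq (ha : a * a = 1) (hz : a * z = -(z * a)) (ht : t ≠ 0) :
    (z * involutionScaling a t) ^ 2 = t • z ^ 2 := by
  rw [sq, mul_involutionScaling_mul ha hz ht, inv_mul_cancel₀ ht, involutionScaling_one, mul_one,
    sq]

theorem neg_mul_involutionScaling_pow_two_mul (ha : a * a = 1) (hz : a * z = -(z * a))
    (ht : t ≠ 0) (n : ℕ) :
    (-(z * involutionScaling a t)) ^ (2 * n) = t ^ n • z ^ (2 * n) := by
  rw [pow_mul, neg_sq, mul_involutionScaling_sq ha hz ht, smul_pow, ← pow_mul]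

theorem skew_commute_neg_mul_involutionScaling (ha : a * a = 1) (hz : a * z = -(z * a))
    (hw : a * w = -(w * a)) (ht : t ^ 2 = -1) (hzw : z * w = -(t • (w * z))) :
    -(w * involutionScaling a (-t)) * -(z * involutionScaling a t) =
      -(t • (-(z * involutionScaling a t) * -(w * involutionScaling a (-t)))) := by
  have ht0 : t ≠ 0 := by
    rintro rfl
    simp at ht
  have wz_eq : w * involutionScaling a (-t) * (z * involutionScaling a t) = -t • (w * z * a) := by
    rw [mul_involutionScaling_mul ha hz (neg_ne_zero.mpr ht0), inv_neg, neg_mul,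
      inv_mul_cancel₀ ht0, involutionScaling_neg_one]
  have zw_eq : z * involutionScaling a t * (w * involutionScaling a (-t)) = t • (z * w * a) := by
    rw [mul_involutionScaling_mul ha hw ht0, mul_neg, inv_mul_cancel₀ ht0,
      involutionScaling_neg_one]
  rw [neg_mul_neg, neg_mul_neg, wz_eq, zw_eq, smul_smul, ← sq, ht, neg_one_smul, neg_neg, hzw,
    neg_mul, smul_mul_assoc, neg_smul]

end InvolutionScaling

section AntiAlgHom

variable {R A B C : Type*} [CommSemiring R] [Semiring A] [Algebra R A] [Semiring B] [Algebra R B]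
  [Semiring C] [Algebra R C]

/-- A linear map between algebras is a unital anti-homomorphism if it preserves `1` and reverses
products. This is a predicate on linear maps; `IsAntiAlgHom.toOpposite` is the bundled version. -/
structure IsAntiAlgHom (S : A →ₗ[R] B) : Prop where
  map_one : S 1 = 1
  map_mul_rev : ∀ u v, S (u * v) = S v * S u

namespace IsAntiAlgHom

/-- An anti-homomorphism `A → B` as an algebra homomorphism `A → Bᵐᵒᵖ`. -/
def toOpposite {S : A →ₗ[R] B} (hS : IsAntiAlgHom S) : A →ₐ[R] Bᵐᵒᵖ :=
  AlgHom.ofLinearMap ((MulOpposite.opLinearEquiv R).toLinearMap ∘ₗ S)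
    (congrArg MulOpposite.op hS.map_one) fun u v ↦ congrArg MulOpposite.op (hS.map_mul_rev u v)

theorem of_opposite (f : A →ₐ[R] Bᵐᵒᵖ) :
    IsAntiAlgHom ((MulOpposite.opLinearEquiv R).symm.toLinearMap ∘ₗ f.toLinearMap) where
  map_one := congrArg MulOpposite.unop (_root_.map_one f)
  map_mul_rev u v := congrArg MulOpposite.unop (map_mul f u v)

/-- The composite of two anti-homomorphisms, which is an algebra homomorphism. -/
def comp {T : B →ₗ[R] C} {S : A →ₗ[R] B} (hT : IsAntiAlgHom T) (hS : IsAntiAlgHom S) : A →ₐ[R] C :=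
  AlgHom.ofLinearMap (T ∘ₗ S) (by simp only [LinearMap.comp_apply, hS.map_one, hT.map_one])
    fun u v ↦ by simp only [LinearMap.comp_apply, hS.map_mul_rev, hT.map_mul_rev]

end IsAntiAlgHom

end AntiAlgHom

section AntiAlgHomScaling

variable {K A : Type*} [Field K] [Ring A] [Algebra K A] {S : A →ₗ[K] A} {a z : A} {t : K}

theorem IsAntiAlgHom.map_involutionScaling (hS : IsAntiAlgHom S) (ha : S a = a) (t : K) :
    S (involutionScaling a t) = involutionScaling a t := by
  simp only [involutionScaling, map_add, map_sub, map_smul, hS.map_one, ha]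

theorem IsAntiAlgHom.map_map_of_anticomm [NeZero (2 : K)] (hS : IsAntiAlgHom S) (hSa : S a = a)
    (ha : a * a = 1) (hz : a * z = -(z * a)) (ht : t ≠ 0)
    (hSz : S z = -(z * involutionScaling a t)) : S (S z) = t • z := by
  calc S (S z) = involutionScaling a t * z * involutionScaling a t := by
        rw [hSz, map_neg, hS.map_mul_rev, hS.map_involutionScaling hSa, hSz, mul_neg, neg_neg,
          mul_assoc]
    _ = t • z := by
      rw [involutionScaling_mul_of_anticomm hz ht, smul_mul_assoc, mul_assoc,
        involutionScaling_mul ha, inv_mul_cancel₀ ht, involutionScaling_one, mul_one]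

end AntiAlgHomScaling

theorem map_map_map_map_eq_neg {R M : Type*} [CommRing R] [AddCommGroup M] [Module R M]
    {f : M →ₗ[R] M} {z : M} {t : R} (hz : f (f z) = t • z) (ht : t ^ 2 = -1) :
    f (f (f (f z))) = -z := by
  rw [hz, map_smul, map_smul, hz, smul_smul, ← sq, ht, neg_one_smul]

theorem toConjAct_smul_of_anticomm {A : Type*} [Ring A] {u : Aˣ} {z : A} (hz : u * z = -(z * u)) :
    ConjAct.toConjAct u • z = -z := by
  rw [ConjAct.units_smul_def, ConjAct.ofConjAct_toConjAct, hz, neg_mul, Units.mul_inv_cancel_right]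

theorem sq_eq_neg_one_of_isPrimitiveRoot_four {R : Type*} [CommRing R] [NoZeroDivisors R] {ζ : R}
    (hζ : IsPrimitiveRoot ζ 4) : ζ ^ 2 = -1 :=
  (hζ.pow four_pos (by norm_num : 4 = 2 * 2)).eq_neg_one_of_two_right

namespace H32

section Presentation

variable (i : ℂ)

theorem a_mul_a : a i * a i = 1 := by
  have relation := RingQuot.mkAlgHom_rel ℂ (HRel.aSq (i := i))
  rwa [map_pow, map_one, sq] at relation

theorem a_mul_x : a i * x i = -(x i * a i) := by
  have relation := RingQuot.mkAlgHom_rel ℂ (HRel.ax (i := i))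
  rwa [map_neg, map_mul, map_mul] at relation

theorem a_mul_y : a i * y i = -(y i * a i) := by
  have relation := RingQuot.mkAlgHom_rel ℂ (HRel.ay (i := i))
  rwa [map_neg, map_mul, map_mul] at relation

theorem x_pow_four : x i ^ 4 = 0 := by
  have relation := RingQuot.mkAlgHom_rel ℂ (HRel.xQuart (i := i))
  rwa [map_pow, map_zero] at relation

theorem y_pow_four : y i ^ 4 = 0 := by
  have relation := RingQuot.mkAlgHom_rel ℂ (HRel.yQuart (i := i))
  rwa [map_pow, map_zero] at relation

theorem x_mul_y : x i * y i = -(i • (y i * x i)) := by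
  have relation := RingQuot.mkAlgHom_rel ℂ (HRel.xy (i := i))
  rwa [map_neg, map_smul, map_mul, map_mul] at relation

theorem pp_add_smul_pm (t : ℂ) : pp i + t • pm i = involutionScaling (a i) t := rfl

theorem pp_sub_smul_pm (t : ℂ) : pp i - t • pm i = involutionScaling (a i) (-t) :=
  (involutionScaling_neg (a i) t).symm

/-- The generator `a` as a unit of `H(32)`, equal to its own inverse. -/
def aUnit : (H32 i)ˣ := ⟨a i, a i, a_mul_a i, a_mul_a i⟩

variable {i} {B : Type*}

theorem algHom_ext [Semiring B] [Algebra ℂ B] {f g : H32 i →ₐ[ℂ] B} (ha : f (a i) = g (a i))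
    (hx : f (x i) = g (x i)) (hy : f (y i) = g (y i)) : f = g := by
  refine RingQuot.ringQuot_ext' _ f g (FreeAlgebra.hom_ext (funext fun generator ↦ ?_))
  cases generator <;> assumption

variable [Ring B] [Algebra ℂ B] {α ξ η : B}

theorem exists_algHom (hα : α ^ 2 = 1) (hαξ : α * ξ = -(ξ * α)) (hαη : α * η = -(η * α))
    (hξ : ξ ^ 4 = 0) (hη : η ^ 4 = 0) (hξη : ξ * η = -(i • (η * ξ))) :
    ∃ f : H32 i →ₐ[ℂ] B, f (a i) = α ∧ f (x i) = ξ ∧ f (y i) = η := by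
  let onFree : FreeAlgebra ℂ HGen →ₐ[ℂ] B :=
    FreeAlgebra.lift ℂ fun | .a => α | .x => ξ | .y => η
  have respects_rel : ∀ ⦃u v⦄, HRel i u v → onFree u = onFree v := by
    intro u v huv
    cases huv <;>
      simpa only [onFree, map_pow, map_mul, map_neg, map_smul, map_one, map_zero,
        FreeAlgebra.lift_ι_apply]
  refine ⟨RingQuot.liftAlgHom ℂ ⟨onFree, respects_rel⟩, ?_, ?_, ?_⟩ <;>
    exact (RingQuot.liftAlgHom_mkAlgHom_apply ..).trans (FreeAlgebra.lift_ι_apply ..)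

end Presentation

variable {i : ℂ} {S T : H32 i →ₗ[ℂ] H32 i}

/-- The anti-homomorphisms of `H(32)` with the values on the generators prescribed for the antipode:
`S(x) = -x(p₊ + i p₋)` and `S(y) = -y(p₊ - i p₋)` are written with `involutionScaling`. -/
structure IsAntipode (S : H32 i →ₗ[ℂ] H32 i) : Prop extends IsAntiAlgHom S where
  map_a : S (a i) = a i
  map_x : S (x i) = -(x i * involutionScaling (a i) i)
  map_y : S (y i) = -(y i * involutionScaling (a i) (-i))

theorem exists_isAntipode (hi : IsPrimitiveRoot i 4) :
    ∃ S : H32 i →ₗ[ℂ] H32 i, IsAntipode S := by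
  have hi0 : i ≠ 0 := hi.ne_zero four_ne_zero
  have hx4 : (-(x i * involutionScaling (a i) i)) ^ (2 * 2) = 0 := by
    rw [neg_mul_involutionScaling_pow_two_mul (a_mul_a i) (a_mul_x i) hi0, x_pow_four, smul_zero]
  have hy4 : (-(y i * involutionScaling (a i) (-i))) ^ (2 * 2) = 0 := by
    rw [neg_mul_involutionScaling_pow_two_mul (a_mul_a i) (a_mul_y i) (neg_ne_zero.mpr hi0),
      y_pow_four, smul_zero]
  have hyx := skew_commute_neg_mul_involutionScaling (a_mul_a i) (a_mul_x i) (a_mul_y i)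
    (sq_eq_neg_one_of_isPrimitiveRoot_four hi) (x_mul_y i)
  obtain ⟨f, hfa, hfx, hfy⟩ := exists_algHom (i := i) (α := MulOpposite.op (a i))
    (ξ := MulOpposite.op (-(x i * involutionScaling (a i) i)))
    (η := MulOpposite.op (-(y i * involutionScaling (a i) (-i))))
    (congrArg MulOpposite.op ((sq _).trans (a_mul_a i)))
    (congrArg MulOpposite.op (neg_mul_involutionScaling_mul_of_anticomm (a_mul_x i) i))
    (congrArg MulOpposite.op (neg_mul_involutionScaling_mul_of_anticomm (a_mul_y i) (-i)))
    (congrArg MulOpposite.op hx4) (congrArg MulOpposite.op hy4) (congrArg MulOpposite.op hyx)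
  exact ⟨_, IsAntiAlgHom.of_opposite f, congrArg MulOpposite.unop hfa,
    congrArg MulOpposite.unop hfx, congrArg MulOpposite.unop hfy⟩

namespace IsAntipode

theorem unique (hS : IsAntipode S) (hT : IsAntipode T) : S = T := by
  have opposite_eq : hS.toOpposite = hT.toOpposite :=
    algHom_ext (congrArg MulOpposite.op (hS.map_a.trans hT.map_a.symm))
      (congrArg MulOpposite.op (hS.map_x.trans hT.map_x.symm))
      (congrArg MulOpposite.op (hS.map_y.trans hT.map_y.symm))
  exact LinearMap.ext fun u ↦ congrArg MulOpposite.unop (DFunLike.congr_fun opposite_eq u)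

theorem map_map_a (hS : IsAntipode S) : S (S (a i)) = a i := by
  rw [hS.map_a, hS.map_a]

theorem map_map_x (hS : IsAntipode S) (hi : i ≠ 0) : S (S (x i)) = i • x i :=
  hS.map_map_of_anticomm hS.map_a (a_mul_a i) (a_mul_x i) hi hS.map_x

theorem map_map_y (hS : IsAntipode S) (hi : i ≠ 0) : S (S (y i)) = -(i • y i) :=
  (hS.map_map_of_anticomm hS.map_a (a_mul_a i) (a_mul_y i) (neg_ne_zero.mpr hi) hS.map_y).trans
    (neg_smul i (y i))

theorem iterate_four (hS : IsAntipode S) (hi : IsPrimitiveRoot i 4) (u : H32 i) :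
    S^[4] u = a i * u * a i := by
  have hi0 : i ≠ 0 := hi.ne_zero four_ne_zero
  have hi_sq : i ^ 2 = -1 := sq_eq_neg_one_of_isPrimitiveRoot_four hi
  have fourth_eq_conj : (hS.comp hS.toIsAntiAlgHom).comp (hS.comp hS.toIsAntiAlgHom) =
      MulSemiringAction.toAlgHom ℂ (H32 i) (ConjAct.toConjAct (aUnit i)) := by
    apply algHom_ext
    · change S (S (S (S (a i)))) = a i * a i * a i
      rw [hS.map_map_a, hS.map_map_a, a_mul_a, one_mul]
    · have fourth_x : S (S (S (S (x i)))) = -x i :=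
        map_map_map_map_eq_neg (hS.map_map_x hi0) hi_sq
      exact fourth_x.trans (toConjAct_smul_of_anticomm (u := aUnit i) (a_mul_x i)).symm
    · have fourth_y : S (S (S (S (y i)))) = -y i :=
        map_map_map_map_eq_neg ((hS.map_map_y hi0).trans (neg_smul i (y i)).symm)
          ((neg_sq i).trans hi_sq)
      exact fourth_y.trans (toConjAct_smul_of_anticomm (u := aUnit i) (a_mul_y i)).symm
  exact DFunLike.congr_fun fourth_eq_conj u

end IsAntipode

end H32

/-- There is a unique ℂ-linear anti-homomorphism `S` of `H(32)` with `S(a) = a`,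
`S(x) = -x(p₊ + i p₋)`, `S(y) = -y(p₊ - i p₋)`; moreover `S²(x) = i x`,
`S²(y) = -i y`, `S²(a) = a`, and `S⁴ = Ad(a)` (note `a = a⁻¹`). -/
theorem H32_antipode (i : ℂ) (hi : IsPrimitiveRoot i 4) :
    (∃! S : H32 i →ₗ[ℂ] H32 i,
      S 1 = 1 ∧ (∀ u v : H32 i, S (u * v) = S v * S u) ∧
      S (H32.a i) = H32.a i ∧
      S (H32.x i) = -(H32.x i * (H32.pp i + i • H32.pm i)) ∧
      S (H32.y i) = -(H32.y i * (H32.pp i - i • H32.pm i))) ∧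
    (∀ S : H32 i →ₗ[ℂ] H32 i,
      S 1 = 1 → (∀ u v : H32 i, S (u * v) = S v * S u) →
      S (H32.a i) = H32.a i →
      S (H32.x i) = -(H32.x i * (H32.pp i + i • H32.pm i)) →
      S (H32.y i) = -(H32.y i * (H32.pp i - i • H32.pm i)) →
      S (S (H32.x i)) = i • H32.x i ∧
      S (S (H32.y i)) = -(i • H32.y i) ∧
      S (S (H32.a i)) = H32.a i ∧
      ∀ u : H32 i, (⇑S)^[4] u = H32.a i * u * H32.a i) := by
  simp only [H32.pp_add_smul_pm, H32.pp_sub_smul_pm]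
  have hi0 : i ≠ 0 := hi.ne_zero four_ne_zero
  constructor
  · obtain ⟨S, hS⟩ := H32.exists_isAntipode hi
    refine ⟨S, ⟨hS.map_one, hS.map_mul_rev, hS.map_a, hS.map_x, hS.map_y⟩, ?_⟩
    rintro T ⟨map_one, map_mul_rev, map_a, map_x, map_y⟩
    exact H32.IsAntipode.unique ⟨⟨map_one, map_mul_rev⟩, map_a, map_x, map_y⟩ hS
  · intro S map_one map_mul_rev map_a map_x map_y
    have hS : H32.IsAntipode S := ⟨⟨map_one, map_mul_rev⟩, map_a, map_x, map_y⟩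
    exact ⟨hS.map_map_x hi0, hS.map_map_y hi0, hS.map_map_a, hS.iterate_four hi⟩
end
end
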